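/- Let Theta in k((X^{-1})) be badly approximable with |Theta| <= 1/2, convergents (p_n/q_n), and suppose there exist x > 0, finite words U_k and palindromic words V_k over k[X] \ k such that the continued fraction of Theta begins with U_k V_k for every k, with |V_{k+1}| > |V_k| >= x |U_k|. Set M = limsup (deg q_l)/l and m = liminf (deg q_l)/l. If x > 3M/m - 1, then inf_{q in k[X] \ {0}} |q| * ||q Theta|| * ||q Theta^{-1}|| = 0. -/

import Mathlib

open Polynomial Filter

noncomputable section
open scoped Classical

namespace Littlewood

variable (k : Type*) [Field k]

/-- The element `X` of `k((X⁻¹))`: the inverse of the Laurent-series variable `t = X⁻¹`. -/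
def XLS : LaurentSeries k := (HahnSeries.single (1 : ℤ) (1 : k))⁻¹

variable {k}

/-- Embedding of `k[X]` into `k((X⁻¹))`, sending the polynomial variable to `X`. -/
def emb (p : Polynomial k) : LaurentSeries k := Polynomial.aeval (XLS k) p

/-- The degree of a Laurent series in `X⁻¹`: if `F = ∑_{h ≥ -m} f_h X^{-h}` with
`f_{-m} ≠ 0` then `deg F = m`. -/
def deg (F : LaurentSeries k) : ℤ := -F.order

/-- The norm `|F| = 2 ^ deg F`, with `|0| = 0`. -/
def lnorm (F : LaurentSeries k) : ℝ := if F = 0 then 0 else (2 : ℝ) ^ (deg F)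

/-- Fractional part: the part of the series comprising only negative powers of `X`. -/
def frac (F : LaurentSeries k) : LaurentSeries k where
  coeff n := if 1 ≤ n then F.coeff n else 0
  isPWO_support' := F.isPWO_support'.mono (fun n hn => by
    simp only [Function.mem_support] at hn ⊢
    intro h
    exact hn (by simp [h]))

/-- `‖F‖`: the norm of the fractional part of `F`. -/
def fnorm (F : LaurentSeries k) : ℝ := lnorm (frac F)

/-- `F` is a rational function. -/
def IsRat (F : LaurentSeries k) : Prop :=
  ∃ p q : Polynomial k, q ≠ 0 ∧ F * emb q = emb p

/-- The polynomial part of a Laurent series (the part with nonnegative powers of `X`). -/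
def polyPart (F : LaurentSeries k) : Polynomial k :=
  ∑ i ∈ Finset.range ((-F.order).toNat + 1), Polynomial.C (F.coeff (-(i : ℤ))) * Polynomial.X ^ i

/-- The complete quotients of the continued fraction algorithm applied to `F`. -/
def cfRem (F : LaurentSeries k) : ℕ → LaurentSeries k
  | 0 => F
  | n + 1 => (cfRem F n - emb (polyPart (cfRem F n)))⁻¹

/-- The partial quotients of the continued fraction expansion of `F`. -/
def pq (F : LaurentSeries k) (n : ℕ) : Polynomial k := polyPart (cfRem F n)

/-- Denominators `q_n` of the convergents of the continued fraction with
partial quotients `a`. -/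
def den (a : ℕ → Polynomial k) : ℕ → Polynomial k
  | 0 => 1
  | 1 => a 1
  | n + 2 => a (n + 2) * den a (n + 1) + den a n

/-- Numerators `p_n` of the convergents. -/
def num (a : ℕ → Polynomial k) : ℕ → Polynomial k
  | 0 => a 0
  | 1 => a 1 * a 0 + 1
  | n + 2 => a (n + 2) * num a (n + 1) + num a n

/-- The value of a finite continued fraction `[b_0, b_1, …, b_m]` over `k[X]`. -/
def finCF : List (Polynomial k) → LaurentSeries k
  | [] => 0
  | [b] => emb b
  | b :: l => emb b + (finCF l)⁻¹

/-- `F` is badly approximable. -/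
def Bad (F : LaurentSeries k) : Prop :=
  ∃ c : ℝ, 0 < c ∧ ∀ q : Polynomial k, q ≠ 0 → c ≤ lnorm (emb q) * fnorm (emb q * F)

lemma emb_coeff (p : Polynomial k) (n : ℤ) :
    (emb p).coeff n = if n ≤ 0 then p.coeff n.natAbs else 0 := by
  have hX (i : ℕ) : XLS k ^ i = HahnSeries.single (-(i : ℤ)) (1 : k) := by
    rw [XLS, HahnSeries.inv_single, HahnSeries.single_pow]
    simp
  induction p using Polynomial.induction_on' with
  | add p q hp hq =>
    simp only [emb, map_add, HahnSeries.coeff_add] at hp hq ⊢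
    rw [hp, hq]
    split_ifs <;> simp
  | monomial i a =>
    rw [emb, Polynomial.aeval_monomial, hX, HahnSeries.algebraMap_apply',
      PowerSeries.algebraMap_apply, HahnSeries.ofPowerSeries_C, HahnSeries.C_mul_eq_smul,
      HahnSeries.coeff_smul,
      HahnSeries.coeff_single, Polynomial.coeff_monomial, Algebra.algebraMap_self_apply]
    split_ifs <;> first | omega | simp

lemma emb_add (p q : Polynomial k) : emb (p + q) = emb p + emb q := map_add _ p q

lemma emb_mul (p q : Polynomial k) : emb (p * q) = emb p * emb q := map_mul _ p q

lemma emb_zero : emb (0 : Polynomial k) = 0 := map_zero _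

lemma emb_one : emb (1 : Polynomial k) = 1 := map_one _

lemma emb_ne_zero {p : Polynomial k} (hp : p ≠ 0) : emb p ≠ 0 := by
  intro h
  have := emb_coeff p (-(p.natDegree : ℤ))
  rw [h] at this
  simp at this
  exact hp (Polynomial.leadingCoeff_eq_zero.mp this.symm)

lemma emb_polyPart_add_frac (F : LaurentSeries k) : emb (polyPart F) + frac F = F := by
  ext n
  simp only [HahnSeries.coeff_add, emb_coeff, polyPart, frac, Polynomial.finsetSum_coeff,
    Polynomial.coeff_C_mul, Polynomial.coeff_X_pow]
  by_cases hn : n ≤ 0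
  · have h1 : ¬ 1 ≤ n := by omega
    obtain ⟨j, rfl⟩ : ∃ j : ℕ, n = -(j : ℤ) := ⟨n.natAbs, by omega⟩
    simp only [hn, h1, if_true, if_false, add_zero, Int.natAbs_neg, Int.natAbs_natCast, mul_ite,
      mul_one, mul_zero, Finset.sum_ite_eq, Finset.mem_range]
    split_ifs with h
    · rfl
    · symm
      exact HahnSeries.coeff_eq_zero_of_lt_order (by omega)
  · have h1 : 1 ≤ n := by omega
    simp [hn, h1]

lemma lnorm_nonneg (F : LaurentSeries k) : 0 ≤ lnorm F := by
  unfold lnorm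
  split_ifs <;> positivity

lemma lnorm_pos {F : LaurentSeries k} (hF : F ≠ 0) : 0 < lnorm F := by
  rw [lnorm, if_neg hF]
  positivity

lemma lnorm_zero : lnorm (0 : LaurentSeries k) = 0 := by simp [lnorm]

lemma lnorm_mul (F G : LaurentSeries k) : lnorm (F * G) = lnorm F * lnorm G := by
  by_cases hF : F = 0
  · simp [hF, lnorm]
  by_cases hG : G = 0
  · simp [hG, lnorm]
  rw [lnorm, lnorm, lnorm, if_neg hF, if_neg hG, if_neg (mul_ne_zero hF hG), deg, deg, deg,
    HahnSeries.order_mul hF hG, neg_add, zpow_add₀ (by norm_num)]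

lemma lnorm_one : lnorm (1 : LaurentSeries k) = 1 := by simp [lnorm, deg]

lemma lnorm_inv (F : LaurentSeries k) : lnorm F⁻¹ = (lnorm F)⁻¹ := by
  by_cases hF : F = 0
  · simp [hF, lnorm]
  apply eq_inv_of_mul_eq_one_left
  rw [← lnorm_mul, inv_mul_cancel₀ hF, lnorm_one]

lemma lnorm_neg (F : LaurentSeries k) : lnorm (-F) = lnorm F := by
  simp [lnorm, deg, HahnSeries.order_neg]

lemma lnorm_le_of_coeff {F : LaurentSeries k} {n : ℤ} (h : ∀ i < n, F.coeff i = 0) :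
    lnorm F ≤ (2 : ℝ) ^ (-n) := by
  by_cases hF : F = 0
  · rw [hF, lnorm_zero]
    positivity
  rw [lnorm, if_neg hF, deg]
  refine zpow_le_zpow_right₀ (by norm_num) (neg_le_neg ?_)
  by_contra! hlt
  exact (HahnSeries.coeff_order_eq_zero.not.mpr hF) (h _ hlt)

lemma lnorm_add_le (F G : LaurentSeries k) : lnorm (F + G) ≤ max (lnorm F) (lnorm G) := by
  by_cases hF : F = 0
  · simp [hF]
  by_cases hG : G = 0
  · simp [hG]
  have h : lnorm (F + G) ≤ (2 : ℝ) ^ (-(min F.order G.order)) := by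
    refine lnorm_le_of_coeff fun i hi => ?_
    rw [HahnSeries.coeff_add, HahnSeries.coeff_eq_zero_of_lt_order (by omega),
      HahnSeries.coeff_eq_zero_of_lt_order (by omega), add_zero]
  refine h.trans ?_
  rw [lnorm, lnorm, if_neg hF, if_neg hG, deg, deg]
  rcases min_choice F.order G.order with h | h <;> rw [h]
  · exact le_max_left _ _
  · exact le_max_right _ _

lemma lnorm_emb {p : Polynomial k} (hp : p ≠ 0) : lnorm (emb p) = (2 : ℝ) ^ p.natDegree := by
  have hne := emb_ne_zero hp
  have : (emb p).order = -(p.natDegree : ℤ) := by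
    apply le_antisymm
    · apply HahnSeries.order_le_of_coeff_ne_zero
      rw [emb_coeff]
      simpa using hp
    · by_contra! hlt
      apply HahnSeries.coeff_order_eq_zero.not.mpr hne
      rw [emb_coeff, if_pos (by omega)]
      exact Polynomial.coeff_eq_zero_of_natDegree_lt (by omega)
  rw [lnorm, if_neg hne, deg, this, neg_neg, zpow_natCast]

lemma lnorm_frac_le (F : LaurentSeries k) : lnorm (frac F) ≤ lnorm F := by
  by_cases hF : F = 0
  · have : frac F = 0 := by ext n; simp [frac, hF]
    rw [this, hF]
  conv_rhs => rw [lnorm, if_neg hF, deg]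
  refine lnorm_le_of_coeff fun i hi => ?_
  simp only [frac]
  rw [HahnSeries.coeff_eq_zero_of_lt_order hi, ite_self]

lemma lnorm_frac_le_half (F : LaurentSeries k) : lnorm (frac F) ≤ 1 / 2 := by
  have : lnorm (frac F) ≤ (2 : ℝ) ^ (-1 : ℤ) :=
    lnorm_le_of_coeff fun i hi => if_neg (by omega)
  simpa using this

lemma fnorm_le_lnorm_sub_emb (F : LaurentSeries k) (p : Polynomial k) :
    fnorm F ≤ lnorm (F - emb p) := by
  have : frac F = frac (F - emb p) := by
    ext n
    simp only [frac, HahnSeries.coeff_sub, emb_coeff]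
    split_ifs with h1 h2
    · omega
    · simp
    · rfl
  rw [fnorm, this]
  exact lnorm_frac_le _

lemma not_isRat_inv_sub_emb {F : LaurentSeries k} (hF : ¬ IsRat F) (p : Polynomial k) :
    ¬ IsRat (F - emb p)⁻¹ := by
  rintro ⟨p', q, hq, h⟩
  have hne : F - emb p ≠ 0 := fun h0 =>
    hF ⟨p, 1, one_ne_zero, by rw [emb_one, mul_one, sub_eq_zero.mp h0]⟩
  have hq' : emb q = (F - emb p) * emb p' := by rw [← h]; field_simp
  have hp' : p' ≠ 0 := by
    rintro rfl
    rw [emb_zero, mul_zero] at hq'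
    exact emb_ne_zero hq hq'
  exact hF ⟨q + p * p', p', hp', by rw [emb_add, emb_mul, hq']; ring⟩

lemma not_isRat_cfRem {F : LaurentSeries k} (hF : ¬ IsRat F) (n : ℕ) : ¬ IsRat (cfRem F n) := by
  induction n with
  | zero => exact hF
  | succ n ih => exact not_isRat_inv_sub_emb ih _

lemma frac_ne_zero {F : LaurentSeries k} (hF : ¬ IsRat F) : frac F ≠ 0 := by
  intro h
  have := emb_polyPart_add_frac F
  rw [h, add_zero] at this
  exact hF ⟨polyPart F, 1, one_ne_zero, by rw [emb_one, mul_one, this]⟩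

lemma cfRem_succ (F : LaurentSeries k) (n : ℕ) : cfRem F (n + 1) = (frac (cfRem F n))⁻¹ := by
  rw [cfRem, ← eq_sub_iff_add_eq'.mpr (emb_polyPart_add_frac (cfRem F n))]

lemma cfRem_ne_zero {F : LaurentSeries k} (hF : ¬ IsRat F) (n : ℕ) : cfRem F n ≠ 0 := by
  intro h
  exact not_isRat_cfRem hF n ⟨0, 1, one_ne_zero, by rw [h, zero_mul, emb_zero]⟩

lemma two_le_lnorm_cfRem_succ {F : LaurentSeries k} (hF : ¬ IsRat F) (n : ℕ) :
    2 ≤ lnorm (cfRem F (n + 1)) := by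
  rw [cfRem_succ, lnorm_inv]
  have h := lnorm_pos (frac_ne_zero (not_isRat_cfRem hF n))
  rw [le_inv_comm₀ (by norm_num) h]
  simpa using lnorm_frac_le_half (cfRem F n)

lemma lnorm_emb_pq_succ {F : LaurentSeries k} (hF : ¬ IsRat F) (n : ℕ) :
    lnorm (emb (pq F (n + 1))) = lnorm (cfRem F (n + 1)) := by
  have h2 := two_le_lnorm_cfRem_succ hF n
  have hf := lnorm_frac_le_half (cfRem F (n + 1))
  have hd := emb_polyPart_add_frac (cfRem F (n + 1))
  have h1 := lnorm_add_le (emb (pq F (n + 1))) (frac (cfRem F (n + 1)))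
  have h3 := lnorm_add_le (cfRem F (n + 1)) (-frac (cfRem F (n + 1)))
  rw [lnorm_neg, ← sub_eq_add_neg, ← eq_sub_iff_add_eq.mpr hd] at h3
  rw [pq] at h1 ⊢
  rw [hd] at h1
  rcases le_max_iff.mp h1 with h1 | h1
  · rcases le_max_iff.mp h3 with h3 | h3
    · exact le_antisymm h3 h1
    · linarith
  · linarith

lemma one_le_natDegree_pq_succ {F : LaurentSeries k} (hF : ¬ IsRat F) (n : ℕ) :
    1 ≤ (pq F (n + 1)).natDegree := by
  have h2 := two_le_lnorm_cfRem_succ hF n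
  rw [← lnorm_emb_pq_succ hF] at h2
  by_cases h0 : pq F (n + 1) = 0
  · rw [h0, emb_zero, lnorm_zero] at h2
    norm_num at h2
  rw [lnorm_emb h0] at h2
  by_contra! hlt
  rw [Nat.lt_one_iff.mp hlt] at h2
  norm_num at h2

lemma den_congr {a b : ℕ → Polynomial k} {n : ℕ} (h : ∀ i ≤ n, a i = b i) :
    ∀ j ≤ n, den a j = den b j
  | 0, _ => rfl
  | 1, hj => h 1 hj
  | j + 2, hj => by
    rw [den, den, h _ hj, den_congr h (j + 1) (by omega), den_congr h j (by omega)]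

lemma num_congr {a b : ℕ → Polynomial k} {n : ℕ} (h : ∀ i ≤ n, a i = b i) :
    ∀ j ≤ n, num a j = num b j
  | 0, hj => h 0 hj
  | 1, hj => by rw [num, num, h 1 hj, h 0 (by omega)]
  | j + 2, hj => by
    rw [num, num, h _ hj, num_congr h (j + 1) (by omega), num_congr h j (by omega)]

lemma natDegree_den_succ {b : ℕ → Polynomial k} (hb : ∀ i, 1 ≤ (b (i + 1)).natDegree) (n : ℕ) :
    den b n ≠ 0 ∧ den b (n + 1) ≠ 0 ∧
      (den b (n + 1)).natDegree = (b (n + 1)).natDegree + (den b n).natDegree := by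
  have hb0 (i : ℕ) : b (i + 1) ≠ 0 := fun h => by simpa [h] using hb i
  induction n with
  | zero => exact ⟨one_ne_zero, hb0 0, by simp [den]⟩
  | succ n ih =>
    obtain ⟨_, h1, hd⟩ := ih
    have hm : (b (n + 2) * den b (n + 1)).natDegree
        = (b (n + 2)).natDegree + (den b (n + 1)).natDegree :=
      Polynomial.natDegree_mul (hb0 _) h1
    have hlt : (den b n).natDegree < (b (n + 2) * den b (n + 1)).natDegree := by
      have := hb n
      omega
    have hd2 : (den b (n + 2)).natDegree
        = (b (n + 2)).natDegree + (den b (n + 1)).natDegree := by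
      rw [den, Polynomial.natDegree_add_eq_left_of_natDegree_lt hlt, hm]
    refine ⟨h1, fun h => ?_, hd2⟩
    have := hb (n + 1)
    rw [h] at hd2
    simp only [Polynomial.natDegree_zero] at hd2
    omega

lemma den_ne_zero {b : ℕ → Polynomial k} (hb : ∀ i, 1 ≤ (b (i + 1)).natDegree) (n : ℕ) :
    den b n ≠ 0 := (natDegree_den_succ hb n).1

lemma natDegree_den {b : ℕ → Polynomial k} (hb : ∀ i, 1 ≤ (b (i + 1)).natDegree) (n : ℕ) :
    (den b n).natDegree = ∑ i ∈ Finset.range n, (b (i + 1)).natDegree := by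
  induction n with
  | zero => simp [den]
  | succ n ih => rw [(natDegree_den_succ hb n).2.2, Finset.sum_range_succ, ih, add_comm]

lemma le_natDegree_den {b : ℕ → Polynomial k} (hb : ∀ i, 1 ≤ (b (i + 1)).natDegree) (n : ℕ) :
    n ≤ (den b n).natDegree := by
  rw [natDegree_den hb]
  simpa using Finset.sum_le_sum fun i (_ : i ∈ Finset.range n) => hb i

lemma prod_ofFn_continuant {b : ℕ → Polynomial k} (h0 : b 0 = 0) (n : ℕ) :
    (((List.range (n + 1)).map fun i => !![b (i + 1), 1; 1, 0]).prod :
      Matrix (Fin 2) (Fin 2) (Polynomial k))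
      = !![den b (n + 1), den b n; num b (n + 1), num b n] := by
  induction n with
  | zero => simp [den, num, h0]
  | succ n ih =>
    rw [List.range_succ, List.map_append, List.prod_append, ih]
    simp [den, num, mul_comm (den b (n + 1)), mul_comm (num b (n + 1))]

lemma num_eq_den_of_palindrome {b : ℕ → Polynomial k} (h0 : b 0 = 0) (n : ℕ)
    (hb : ∀ i ≤ n, b (i + 1) = b (n + 1 - i)) : num b (n + 1) = den b n := by
  have hP := prod_ofFn_continuant h0 n
  have hT := congrArg Matrix.transpose hP
  rw [Matrix.transpose_list_prod, ← List.map_reverse, ← List.map_reverse, List.map_map] at hT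
  have hL : ((List.range (n + 1)).reverse.map
        (Matrix.transpose ∘ fun i => (!![b (i + 1), 1; 1, 0] : Matrix (Fin 2) (Fin 2) k[X])))
      = (List.range (n + 1)).map fun i => !![b (i + 1), 1; 1, 0] := by
    apply List.ext_getElem
    · simp
    intro i h1 h2
    simp only [List.length_map, List.length_range] at h2
    have hbi := hb i (by omega)
    have hi : n + 1 - 1 - i + 1 = n + 1 - i := by omega
    simp only [List.getElem_map, List.getElem_reverse, List.getElem_range, List.length_range,
      Function.comp, hi, hbi]
    ext a c
    fin_cases a <;> fin_cases c <;> rfl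
  rw [hL, hP] at hT
  simpa using (congrFun (congrFun hT 1) 0)

/-- The error of the `n`-th convergent of `b` as an approximation of `F`. -/
def cfErr (b : ℕ → Polynomial k) (F : LaurentSeries k) (n : ℕ) : LaurentSeries k :=
  emb (den b n) * F - emb (num b n)

lemma cfErr_add_two (b : ℕ → Polynomial k) (F : LaurentSeries k) (n : ℕ) :
    cfErr b F (n + 2) = emb (b (n + 2)) * cfErr b F (n + 1) + cfErr b F n := by
  simp only [cfErr, den, num, emb_add, emb_mul]
  ring

lemma cfErr_succ_mul_cfRem {F : LaurentSeries k} (hF : ¬ IsRat F) (h0 : pq F 0 = 0) (n : ℕ) :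
    cfErr (pq F) F (n + 1) * cfRem F (n + 2) = -cfErr (pq F) F n := by
  have hfr (n : ℕ) : (emb (pq F n) - cfRem F n) * cfRem F (n + 1) = -1 := by
    have h := frac_ne_zero (not_isRat_cfRem hF n)
    have hd := emb_polyPart_add_frac (cfRem F n)
    have : emb (pq F n) - cfRem F n = -frac (cfRem F n) := by
      rw [pq]
      linear_combination hd
    rw [this, cfRem_succ, neg_mul, mul_inv_cancel₀ h]
  induction n with
  | zero =>
    have h1 : F * cfRem F 1 = 1 := by
      have := hfr 0
      rw [h0, emb_zero, zero_sub, neg_mul, neg_inj] at this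
      exact this
    have e0 : cfErr (pq F) F 0 = F := by simp [cfErr, den, num, h0, emb_zero, emb_one]
    have e1 : cfErr (pq F) F 1 = (emb (pq F 1) - cfRem F 1) * F := by
      simp only [cfErr, den, num, h0, mul_zero, zero_add, emb_one]
      linear_combination h1
    rw [e0, e1]
    linear_combination F * hfr 1
  | succ n ih =>
    rw [cfErr_add_two]
    linear_combination cfErr (pq F) F (n + 1) * hfr (n + 2) + cfRem F (n + 3) * ih

lemma lnorm_cfErr_pq {F : LaurentSeries k} (hF : ¬ IsRat F) (h0 : pq F 0 = 0) (n : ℕ) :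
    lnorm (cfErr (pq F) F n) = ((2 : ℝ) ^ (den (pq F) (n + 1)).natDegree)⁻¹ := by
  have ha := one_le_natDegree_pq_succ hF
  have hc (n : ℕ) : lnorm (cfRem F (n + 1)) = (2 : ℝ) ^ (pq F (n + 1)).natDegree := by
    rw [← lnorm_emb_pq_succ hF, lnorm_emb]
    intro h
    simpa [h] using ha n
  apply eq_inv_of_mul_eq_one_left
  induction n with
  | zero =>
    have e0 : cfErr (pq F) F 0 = F := by simp [cfErr, den, num, h0, emb_zero, emb_one]
    have h := emb_polyPart_add_frac F
    have hp : polyPart F = 0 := h0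
    rw [hp, emb_zero, zero_add] at h
    rw [e0, den, ← hc 0, cfRem_succ, cfRem, h, ← lnorm_mul,
      mul_inv_cancel₀ (show F ≠ 0 from cfRem_ne_zero hF 0), lnorm_one]
  | succ n ih =>
    rw [(natDegree_den_succ ha (n + 1)).2.2, pow_add, ← hc (n + 1), ← mul_assoc, ← lnorm_mul,
      cfErr_succ_mul_cfRem hF h0, lnorm_neg, ih]

/-- If `b` agrees with the partial quotients of `F` up to index `n + 1`, then the later convergents
of `b` still approximate `F` well. -/
lemma lnorm_cfErr_le {F : LaurentSeries k} (hF : ¬ IsRat F) (h0 : pq F 0 = 0)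
    {b : ℕ → Polynomial k} (hb : ∀ i, 1 ≤ (b (i + 1)).natDegree) {n : ℕ}
    (hab : ∀ i ≤ n + 1, b i = pq F i) (i : ℕ) :
    lnorm (cfErr b F (n + i)) ≤ (2 : ℝ) ^ (den b (n + 1 + i)).natDegree
        / ((2 : ℝ) ^ (den (pq F) (n + 1)).natDegree) ^ 2 ∧
      lnorm (cfErr b F (n + 1 + i)) ≤ (2 : ℝ) ^ (den b (n + 1 + i)).natDegree
        / ((2 : ℝ) ^ (den (pq F) (n + 1)).natDegree) ^ 2 := by
  induction i with
  | zero =>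
    have hE (j : ℕ) (hj : j ≤ n + 1) : cfErr b F j = cfErr (pq F) F j := by
      rw [cfErr, cfErr, den_congr hab j hj, num_congr hab j hj]
    have hpos : (0 : ℝ) < 2 ^ (den (pq F) (n + 1)).natDegree := by positivity
    rw [add_zero, add_zero, hE _ le_rfl, hE _ n.le_succ, lnorm_cfErr_pq hF h0,
      lnorm_cfErr_pq hF h0, den_congr hab _ le_rfl, sq, div_mul_cancel_left₀ hpos.ne']
    refine ⟨le_rfl, inv_anti₀ hpos (pow_le_pow_right₀ (by norm_num) ?_)⟩
    have := (natDegree_den_succ (one_le_natDegree_pq_succ hF) (n + 1)).2.2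
    omega
  | succ i ih =>
    obtain ⟨ih1, ih2⟩ := ih
    have hd := (natDegree_den_succ hb (n + 1 + i)).2.2
    have hbne : b (n + 1 + i + 1) ≠ 0 := fun h => by simpa [h] using hb (n + 1 + i)
    have hle : (2 : ℝ) ^ (den b (n + 1 + i)).natDegree
        ≤ (2 : ℝ) ^ (den b (n + 1 + i + 1)).natDegree :=
      pow_le_pow_right₀ (by norm_num) (by omega)
    have hdiv := div_le_div_of_nonneg_right hle
      (by positivity : (0 : ℝ) ≤ ((2 : ℝ) ^ (den (pq F) (n + 1)).natDegree) ^ 2)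
    rw [show n + (i + 1) = n + 1 + i by ring, ← add_assoc]
    refine ⟨ih2.trans hdiv, ?_⟩
    have hrec : cfErr b F (n + 1 + i + 1)
        = emb (b (n + 1 + i + 1)) * cfErr b F (n + 1 + i) + cfErr b F (n + i) := by
      have := cfErr_add_two b F (n + i)
      rwa [show n + i + 2 = n + 1 + i + 1 by ring, show n + i + 1 = n + 1 + i by ring] at this
    rw [hrec]
    refine (lnorm_add_le _ _).trans (max_le ?_ (ih1.trans hdiv))
    rw [lnorm_mul, lnorm_emb hbne, hd, pow_add, mul_div_assoc]
    exact mul_le_mul_of_nonneg_left ih2 (by positivity)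

lemma exists_natDegree_den_le_of_bad {F : LaurentSeries k} (hF : ¬ IsRat F) (h0 : pq F 0 = 0)
    (hbad : Bad F) : ∃ B : ℕ, ∀ n, (den (pq F) n).natDegree ≤ B * n := by
  obtain ⟨c, hc, h⟩ := hbad
  have ha := one_le_natDegree_pq_succ hF
  obtain ⟨B, hB⟩ := exists_pow_lt_of_lt_one hc (by norm_num : (1 / 2 : ℝ) < 1)
  have hpq (n : ℕ) : (pq F (n + 1)).natDegree ≤ B := by
    have h1 := h (den (pq F) n) (den_ne_zero ha n)
    have h2 := fnorm_le_lnorm_sub_emb (emb (den (pq F) n) * F) (num (pq F) n)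
    have h3 := lnorm_cfErr_pq hF h0 n
    rw [cfErr] at h3
    rw [h3] at h2
    rw [lnorm_emb (den_ne_zero ha n)] at h1
    have h4 := h1.trans (mul_le_mul_of_nonneg_left h2 (by positivity))
    rw [(natDegree_den_succ ha n).2.2, pow_add, mul_inv, mul_comm, mul_assoc,
      inv_mul_cancel₀ (by positivity), mul_one, ← inv_pow] at h4
    by_contra! hlt
    have h5 := pow_le_pow_of_le_one (by norm_num : (0 : ℝ) ≤ 1 / 2) (by norm_num) hlt.le
    norm_num at h5 hB h4
    linarith
  refine ⟨B, fun n => ?_⟩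
  rw [natDegree_den ha]
  refine (Finset.sum_le_sum fun i _ => hpq i).trans ?_
  simp [mul_comm]

/-- An initial word `U V` of the continued fraction of `F`, with `V` a palindrome, gives a denominator for
which the Littlewood product is small; here `|U| = r` and `|V| = s`. -/
lemma exists_littlewood_product_le {F : LaurentSeries k} (hF : ¬ IsRat F) (h0 : pq F 0 = 0)
    {r s : ℕ} (hs : 1 ≤ s) (hpal : ∀ i, 1 ≤ i → i ≤ s → pq F (r + i) = pq F (r + s + 1 - i)) :
    ∃ q : Polynomial k, q ≠ 0 ∧
      lnorm (emb q) * fnorm (emb q * F) * fnorm (emb q * F⁻¹)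
        ≤ (lnorm F)⁻¹ * ((2 : ℝ) ^ (3 * (den (pq F) r).natDegree)
            / 2 ^ (den (pq F) (r + s)).natDegree) := by
  obtain ⟨n, hn⟩ : ∃ n, r + s = n + 1 := ⟨r + s - 1, by omega⟩
  have ha := one_le_natDegree_pq_succ hF
  set b : ℕ → Polynomial k :=
    fun i => if i ≤ n + 1 then pq F i else pq F (n + 1 + r - i + 1) with hbdef
  have hb (i : ℕ) : 1 ≤ (b (i + 1)).natDegree := by
    simp only [hbdef]
    split_ifs <;> exact ha _
  have hab : ∀ i ≤ n + 1, b i = pq F i := fun i hi => if_pos hi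
  have hb' : ∀ i, n + 1 < i → b i = pq F (n + 1 + r - i + 1) := fun i hi => by
    simp [hbdef, hi]
  have hpalb : ∀ i ≤ n + r, b (i + 1) = b (n + r + 1 - i) := by
    intro i hi
    rcases lt_or_ge i r with h1 | h1
    · rw [hab _ (by omega), hb' _ (by omega)]
      congr 1
      omega
    rcases lt_or_ge n i with h2 | h2
    · rw [hb' _ (by omega), hab _ (by omega)]
      congr 1
      omega
    · rw [hab _ (by omega), hab _ (by omega)]
      have := hpal (i + 1 - r) (by omega) (by omega)
      rw [show r + (i + 1 - r) = i + 1 by omega] at this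
      rw [this]
      congr 1
      omega
  have hnum : num b (n + 1 + r) = den b (n + r) := by
    rw [show n + 1 + r = n + r + 1 by ring]
    exact num_eq_den_of_palindrome (by rw [hab 0 (by omega), h0]) _ hpalb
  have hdeg : (den b (n + 1 + r)).natDegree
      = (den (pq F) (n + 1)).natDegree + (den (pq F) r).natDegree := by
    rw [natDegree_den hb, natDegree_den ha, natDegree_den ha, Finset.sum_range_add]
    congr 1
    · exact Finset.sum_congr rfl fun i hi => by
        rw [hab _ (by have := Finset.mem_range.mp hi; omega)]
    · rw [← Finset.sum_range_reflect]
      exact Finset.sum_congr rfl fun i hi => by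
        have := Finset.mem_range.mp hi
        rw [hb' _ (by omega)]
        congr 2
        omega
  have hdeg' : (den b (n + r)).natDegree ≤ (den b (n + 1 + r)).natDegree := by
    have := (natDegree_den_succ hb (n + r)).2.2
    rw [show n + r + 1 = n + 1 + r by ring] at this
    omega
  obtain ⟨hE1, hE2⟩ := lnorm_cfErr_le hF h0 hb hab r
  have hF0 : F ≠ 0 := cfRem_ne_zero hF 0
  have hFpos := lnorm_pos hF0
  refine ⟨den b (n + r), den_ne_zero hb _, ?_⟩
  have hf1 := (fnorm_le_lnorm_sub_emb (emb (den b (n + r)) * F) (num b (n + r))).trans hE1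
  have hf2 : fnorm (emb (den b (n + r)) * F⁻¹) ≤ (lnorm F)⁻¹ * lnorm (cfErr b F (n + 1 + r)) := by
    refine (fnorm_le_lnorm_sub_emb _ (den b (n + 1 + r))).trans_eq ?_
    rw [← lnorm_inv, ← lnorm_mul, ← lnorm_neg, cfErr, hnum]
    congr 1
    field_simp
    ring
  have hf2' := hf2.trans (mul_le_mul_of_nonneg_left hE2 (inv_nonneg.mpr hFpos.le))
  have hq : lnorm (emb (den b (n + r))) ≤ (2 : ℝ) ^ (den b (n + 1 + r)).natDegree := by
    rw [lnorm_emb (den_ne_zero hb _)]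
    exact pow_le_pow_right₀ (by norm_num) hdeg'
  refine (mul_le_mul (mul_le_mul hq hf1 (lnorm_nonneg _) (by positivity)) hf2'
    (lnorm_nonneg _) (by positivity)).trans_eq ?_
  rw [hdeg, hn, pow_add, pow_mul']
  field_simp

/-- Comparison of the growth of `D` at `r j` and at `r j + s j`, when `D l / l` has lower limit `m`
and upper limit `M`. -/
lemma tendsto_three_mul_sub_atBot {D : ℕ → ℕ} {B : ℕ} (hD : ∀ l, l ≤ D l) (hB : ∀ l, D l ≤ B * l)
    {x : ℝ} (hx : 0 < x) {r s : ℕ → ℕ} (hs : Tendsto s atTop atTop)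
    (hxs : ∀ j, x * (r j : ℝ) ≤ s j)
    (hM : 3 * (limsup (fun l : ℕ => (D l : ℝ) / l) atTop /
      liminf (fun l : ℕ => (D l : ℝ) / l) atTop) - 1 < x) :
    Tendsto (fun j => 3 * (D (r j) : ℝ) - D (r j + s j)) atTop atBot := by
  have hle (l : ℕ) : (D l : ℝ) / l ≤ B :=
    div_le_of_le_mul₀ (by positivity) (by positivity) (by exact_mod_cast hB l)
  have hbdd : IsBoundedUnder (· ≤ ·) atTop (fun l : ℕ => (D l : ℝ) / l) :=
    isBoundedUnder_of ⟨B, hle⟩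
  have hbdd' : IsBoundedUnder (· ≥ ·) atTop (fun l : ℕ => (D l : ℝ) / l) :=
    isBoundedUnder_of ⟨0, fun l => by positivity⟩
  set M := limsup (fun l : ℕ => (D l : ℝ) / l) atTop with hMdef
  set m := liminf (fun l : ℕ => (D l : ℝ) / l) atTop with hmdef
  have hm1 : 1 ≤ m := by
    refine le_liminf_of_le hbdd.isCoboundedUnder_ge ?_
    filter_upwards [eventually_gt_atTop 0] with l hl
    rw [le_div_iff₀ (by exact_mod_cast hl), one_mul]
    exact_mod_cast hD l
  have hlt : 3 * M < (1 + x) * m := by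
    have h1 : 3 * (M / m) < 1 + x := by linarith
    rw [← mul_div_assoc, div_lt_iff₀ (by linarith)] at h1
    exact h1
  obtain ⟨δ, hδ, hδlt⟩ : ∃ δ > 0, 3 * (M + δ) < (1 + x) * (m - δ) := by
    refine ⟨((1 + x) * m - 3 * M) / (2 * (4 + x)), div_pos (by linarith) (by linarith), ?_⟩
    have h : ((1 + x) * m - 3 * M) / (2 * (4 + x)) * (4 + x) = ((1 + x) * m - 3 * M) / 2 := by
      field_simp
    nlinarith
  have hev1 := eventually_lt_of_limsup_lt (show M < M + δ by linarith) hbdd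
  have hev2 := eventually_lt_of_lt_liminf (show m - δ < m by linarith) hbdd'
  obtain ⟨L, hL⟩ := eventually_atTop.mp hev1
  have hMnn : 0 ≤ M + δ := by
    have h2 := hL L le_rfl
    have h3 : (0 : ℝ) ≤ (D L : ℝ) / L := by positivity
    linarith
  have hup (l : ℕ) : (D l : ℝ) ≤ (M + δ) * l + B * L := by
    rcases lt_or_ge l L with h | h
    · have h1 : (D l : ℝ) ≤ B * l := by exact_mod_cast hB l
      have h2 : (B : ℝ) * l ≤ B * L := by gcongr
      have h3 : 0 ≤ (M + δ) * l := by positivity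
      linarith
    · rcases Nat.eq_zero_or_pos l with rfl | hl
      · have h1 : (D 0 : ℝ) ≤ 0 := by exact_mod_cast (hB 0)
        have h2 : (0 : ℝ) ≤ B * L := by positivity
        simp only [Nat.cast_zero, mul_zero, zero_add]
        linarith
      · have h1 := hL l h
        rw [div_lt_iff₀ (by exact_mod_cast hl)] at h1
        have h2 : (0 : ℝ) ≤ B * L := by positivity
        linarith
  set η := (m - δ) - 3 * (M + δ) / (1 + x) with hη
  have hηpos : 0 < η := by
    rw [hη, sub_pos, div_lt_iff₀ (by linarith)]
    linarith
  have hn : Tendsto (fun j => r j + s j) atTop atTop :=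
    tendsto_atTop_mono (fun j => Nat.le_add_left _ _) hs
  have hlin : Tendsto (fun j => 3 * ((B : ℝ) * L) + (-η) * ((r j + s j : ℕ) : ℝ)) atTop atBot :=
    tendsto_atBot_add_const_left _ _
      ((tendsto_natCast_atTop_atTop.comp hn).const_mul_atTop_of_neg (by linarith))
  refine tendsto_atBot_mono' _ ?_ hlin
  filter_upwards [hn.eventually hev2, hn.eventually (eventually_gt_atTop 0)] with j hj hj0
  rw [lt_div_iff₀ (by exact_mod_cast hj0)] at hj
  have h1 := hup (r j)
  have h2 : (r j : ℝ) ≤ ((r j + s j : ℕ) : ℝ) / (1 + x) := by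
    rw [le_div_iff₀ (by linarith)]
    push_cast
    linarith [hxs j]
  have h3 := mul_le_mul_of_nonneg_left h2 hMnn
  have h4 : 3 * (M + δ) / (1 + x) * ((r j + s j : ℕ) : ℝ)
      = 3 * ((M + δ) * (((r j + s j : ℕ) : ℝ) / (1 + x))) := by ring
  rw [hη]
  linarith

theorem theorem3 {k : Type*} [Field k] (Θ : LaurentSeries k)
    (hΘ : ¬ IsRat Θ) (hbad : Bad Θ) (hnorm : lnorm Θ ≤ 1 / 2) (h0 : pq Θ 0 = 0)
    (x : ℝ) (hx : 0 < x) (r s : ℕ → ℕ)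
    (hpal : ∀ K : ℕ, ∀ i : ℕ, 1 ≤ i → i ≤ s K →
      pq Θ (r K + i) = pq Θ (r K + s K + 1 - i))
    (hs : ∀ K : ℕ, s K < s (K + 1))
    (hxs : ∀ K : ℕ, x * (r K : ℝ) ≤ (s K : ℝ))
    (M m : ℝ)
    (hM : M = limsup (fun l : ℕ => ((den (pq Θ) l).natDegree : ℝ) / (l : ℝ)) atTop)
    (hm : m = liminf (fun l : ℕ => ((den (pq Θ) l).natDegree : ℝ) / (l : ℝ)) atTop)
    (hxMm : 3 * (M / m) - 1 < x) :
    ∀ ε : ℝ, 0 < ε → ∃ q : Polynomial k, q ≠ 0 ∧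
      lnorm (emb q) * fnorm (emb q * Θ) * fnorm (emb q * Θ⁻¹) < ε := by
  have hden := le_natDegree_den (one_le_natDegree_pq_succ hΘ)
  obtain ⟨B, hB⟩ := exists_natDegree_den_le_of_bad hΘ h0 hbad
  have hsmono : StrictMono s := strictMono_nat_of_lt_succ hs
  subst hM hm
  have hlim := tendsto_three_mul_sub_atBot hden hB hx hsmono.tendsto_atTop hxs hxMm
  have hpos : 0 < lnorm Θ := lnorm_pos (cfRem_ne_zero hΘ 0)
  intro ε hε
  have hlim2 := (tendsto_rpow_atBot_of_base_gt_one 2 (by norm_num)).comp hlim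
  obtain ⟨j, hj, hj1⟩ := ((hlim2.eventually_lt_const (mul_pos hpos hε)).and
    (eventually_ge_atTop 1)).exists
  obtain ⟨q, hq, hle⟩ := exists_littlewood_product_le hΘ h0
    (hj1.trans hsmono.le_apply) (hpal j)
  refine ⟨q, hq, hle.trans_lt ?_⟩
  rw [inv_mul_lt_iff₀ hpos]
  refine lt_of_eq_of_lt ?_ hj
  rw [Function.comp, Real.rpow_sub (by norm_num), Real.rpow_natCast, ← Real.rpow_natCast 2 (3 * _)]
  push_cast
  rfl

end Littlewood
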